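/- Let K be a field, U a 1-dimensional K-vector space, V a finite-dimensional K-vector space, and S a linear subspace of L(U,V). Assume dim S ≥ 2 if K has more than 2 elements, and dim S ≥ 3 if K has exactly 2 elements. Then every quasi-range-compatible additive group homomorphism F : S → V is local. -/

import Mathlib

theorem exists_third {K : Type*} [Field K] (h : Nat.card K ≠ 2) (c : K) (hc : c ≠ 0) :
    ∃ b : K, b ≠ 0 ∧ b ≠ c := by
  by_contra hcon
  push Not at hcon
  apply h
  have : (Set.univ : Set K) = {0, c} := by
    ext x
    simp only [Set.mem_univ, Set.mem_insert_iff, Set.mem_singleton_iff, true_iff]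
    by_cases hx : x = 0
    · exact Or.inl hx
    · exact Or.inr (hcon x hx)
  rw [← Set.ncard_univ, this, Set.ncard_pair hc.symm]

theorem abstract_local {K W V : Type*} [Field K] [AddCommGroup W] [Module K W]
    [AddCommGroup V] [Module K V]
    (f : W →ₗ[K] V) (hf : Function.Injective f) (F : W →+ V) (d : W)
    (hd : ∀ w, (∀ c : K, w ≠ c • d) → ∃ c : K, F w = c • f w)
    (h1 : 2 ≤ Module.finrank K W) (h2 : Nat.card K = 2 → 3 ≤ Module.finrank K W) :
    ∃ l : K, ∀ w, F w = l • f w := by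
  obtain ⟨w0, hw0⟩ : ∃ w0 : W, ∀ c : K, w0 ≠ c • d := by
    by_contra hcon
    push Not at hcon
    have := finrank_le_one (R := K) d (fun w => by
      obtain ⟨c, hc⟩ := hcon w
      exact ⟨c, hc.symm⟩)
    omega
  have hw00 : w0 ≠ 0 := by simpa using hw0 0
  obtain ⟨l, hl⟩ := hd w0 hw0
  refine ⟨l, ?_⟩
  have key : ∀ v, (∀ c : K, v ≠ c • d) → (∀ c : K, v + w0 ≠ c • d) →
      (∀ c : K, v ≠ c • w0) → F v = l • f v := by
    intro v h1 h2 h3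
    obtain ⟨x, hx⟩ := hd v h1
    obtain ⟨y, hy⟩ := hd _ h2
    have e : x • v + l • w0 = y • (v + w0) := by
      apply hf
      rw [map_add, map_smul, map_smul, map_smul, ← hx, ← hl, ← hy, map_add]
    have e2 : (x - y) • v = (y - l) • w0 := by
      rw [sub_smul, sub_smul, sub_eq_sub_iff_add_eq_add, e, smul_add, add_comm]
    have hxy : x - y = 0 := by
      by_contra hne
      apply h3 ((x - y)⁻¹ * (y - l))
      rw [mul_smul, ← e2, inv_smul_smul₀ hne]
    rw [hxy, zero_smul] at e2
    have hyl : y - l = 0 := (smul_eq_zero.mp e2.symm).resolve_right hw00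
    rw [hx, sub_eq_zero.mp hxy, sub_eq_zero.mp hyl]
  have sub : ∀ a b, F a = l • f a → F b = l • f b → F (a - b) = l • f (a - b) := by
    intro a b ha hb
    rw [map_sub, map_sub, smul_sub, ha, hb]
  have add : ∀ a b, F a = l • f a → F b = l • f b → F (a + b) = l • f (a + b) := by
    intro a b ha hb
    rw [map_add, map_add, smul_add, ha, hb]
  have out : ∀ v, v ∉ Submodule.span K {w0, d} → F v = l • f v := by
    intro v hv
    have hv' : ∀ a b : K, a • w0 + b • d ≠ v := by
      intro a b h
      exact hv (Submodule.mem_span_pair.mpr ⟨a, b, h⟩)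
    refine key v ?_ ?_ ?_
    · intro c h
      exact hv' 0 c (by rw [h]; simp)
    · intro c h
      exact hv' (-1) c (by rw [← h]; simp)
    · intro c h
      exact hv' c 0 (by rw [h]; simp)
  by_cases hP : Submodule.span K {w0, d} = ⊤
  · have hle : Module.finrank K W ≤ 2 := by
      classical
      have := finrank_span_finset_le_card (R := K) ({w0, d} : Finset W)
      have h3 := Finset.card_le_two (a := w0) (b := d)
      rw [Set.finrank] at this
      rw [Finset.coe_pair] at this
      rw [hP, finrank_top] at this
      omega
    have hK : Nat.card K ≠ 2 := fun h => by have := h2 h; omega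
    have hd0 : d ≠ 0 := by
      rintro rfl
      have := finrank_le_one (R := K) w0 (fun w => by
        have hw : w ∈ Submodule.span K {w0, (0 : W)} := hP ▸ Submodule.mem_top
        obtain ⟨a, b, h⟩ := Submodule.mem_span_pair.mp hw
        exact ⟨a, by simpa using h⟩)
      omega
    have hwc : ∀ a b : K, a ≠ 0 → a • w0 ≠ b • d := by
      intro a b ha h
      apply hw0 (a⁻¹ * b)
      rw [mul_smul, ← h, inv_smul_smul₀ ha]
    have gen : ∀ a b : K, a ≠ 0 → a ≠ -1 → b ≠ 0 → F (a • w0 + b • d) = l • f (a • w0 + b • d) := by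
      intro a b ha ha1 hb
      refine key _ ?_ ?_ ?_
      · intro c h
        apply hwc a (c - b) ha
        rw [sub_smul, ← h]; abel
      · intro c h
        apply hwc (a + 1) (c - b) (fun h => ha1 (eq_neg_of_add_eq_zero_left h))
        rw [sub_smul, ← h, add_smul, one_smul]; abel
      · intro c h
        by_cases hca : c - a = 0
        · rw [sub_eq_zero.mp hca] at h
          have : b • d = 0 := by simpa using h
          exact (smul_ne_zero hb hd0) this
        · apply hwc (c - a) b hca
          rw [sub_smul, ← h]; abel
    have hD : ∀ c : K, F (c • d) = l • f (c • d) := by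
      intro c
      by_cases hc : c = 0
      · simp [hc]
      obtain ⟨a, ha, ha1⟩ := exists_third hK (-1) (by simp)
      obtain ⟨b, hb, hbc⟩ := exists_third hK c hc
      have := sub _ _ (gen a b ha ha1 hb) (gen a (b - c) ha ha1 (sub_ne_zero.mpr hbc))
      have e : a • w0 + b • d - (a • w0 + (b - c) • d) = c • d := by
        rw [sub_smul]; abel
      rwa [e] at this
    have hW : ∀ a : K, F (a • w0) = l • f (a • w0) := by
      intro a
      by_cases ha : a = 0
      · simp [ha]
      by_cases ha1 : a = -1
      · subst ha1
        simp [hl]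
      have := sub _ _ (gen a 1 ha ha1 one_ne_zero) (hD 1)
      rwa [add_sub_cancel_right] at this
    intro w
    have hw : w ∈ Submodule.span K {w0, d} := hP ▸ Submodule.mem_top
    obtain ⟨a, b, rfl⟩ := Submodule.mem_span_pair.mp hw
    exact add _ _ (hW a) (hD b)
  · obtain ⟨z, hz⟩ : ∃ z, z ∉ Submodule.span K {w0, d} := by
      by_contra hcon
      push Not at hcon
      exact hP (Submodule.eq_top_iff'.mpr hcon)
    intro w
    by_cases hw : w ∈ Submodule.span K {w0, d}
    · have hwz : w + z ∉ Submodule.span K {w0, d} := fun h =>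
        hz ((Submodule.add_mem_iff_right _ hw).mp h)
      have := sub _ _ (out _ hwz) (out _ hz)
      rwa [add_sub_cancel_right] at this
    · exact out w hw

/-- Let `U` be a 1-dimensional `K`-vector space, `V` finite-dimensional,
and `S` a linear subspace of `L(U,V)` with `dim S ≥ 2` if `K` has more than 2 elements
and `dim S ≥ 3` if `K` has exactly 2 elements. Then every quasi-range-compatible
additive homomorphism `F : S → V` is local. -/
theorem quasi_range_compatible_hom_is_local_of_dimU_eq_one
    (K U V : Type*) [Field K]
    [AddCommGroup U] [Module K U] [FiniteDimensional K U]
    [AddCommGroup V] [Module K V] [FiniteDimensional K V]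
    (hU : Module.finrank K U = 1)
    (S : Submodule K (U →ₗ[K] V))
    (h1 : 2 < Cardinal.mk K → 2 ≤ Module.finrank K S)
    (h2 : Nat.card K = 2 → 3 ≤ Module.finrank K S)
    (F : ↥S →+ V)
    (hq : ∃ D : Submodule K V, Module.finrank K D = 1 ∧
      ∀ s : ↥S, ¬ D ≤ LinearMap.range (s : U →ₗ[K] V) →
        F s ∈ LinearMap.range (s : U →ₗ[K] V)) :
    ∃ x : U, ∀ s : ↥S, F s = (s : U →ₗ[K] V) x := by
  obtain ⟨u, hu0, hu⟩ := finrank_eq_one_iff'.mp hU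
  obtain ⟨D, hD, hq⟩ := hq
  obtain ⟨⟨d, hdD⟩, hd0, hd⟩ := finrank_eq_one_iff'.mp hD
  have hd0' : d ≠ 0 := fun h => hd0 (Subtype.ext h)
  let f : S →ₗ[K] V := (LinearMap.applyₗ u).comp S.subtype
  have hfs : ∀ s : S, f s = (s : U →ₗ[K] V) u := fun s => rfl
  have hf : Function.Injective f := by
    intro s t h
    apply Subtype.ext
    ext x
    obtain ⟨c, rfl⟩ := hu x
    rw [map_smul, map_smul]
    exact congrArg _ h
  have hr : ∀ (s : S) (v : V), v ∈ LinearMap.range (s : U →ₗ[K] V) ↔ ∃ c : K, v = c • f s := by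
    intro s v
    constructor
    · rintro ⟨x, rfl⟩
      obtain ⟨c, rfl⟩ := hu x
      exact ⟨c, by rw [map_smul, hfs]⟩
    · rintro ⟨c, rfl⟩
      exact ⟨c • u, by rw [map_smul, hfs]⟩
  have hq' : ∀ s : S, (∀ c : K, d ≠ c • f s) → ∃ c : K, F s = c • f s := by
    intro s hs
    rw [← hr]
    apply hq
    intro hle
    obtain ⟨c, hc⟩ := (hr s d).mp (hle hdD)
    exact hs c hc
  have hdim : 2 ≤ Module.finrank K S := by
    by_cases hK : Nat.card K = 2
    · have := h2 hK
      omega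
    · apply h1
      obtain ⟨b, hb, hb1⟩ := exists_third hK (1 : K) one_ne_zero
      classical
      have h3 : ((({0, 1, b} : Finset K).card : ℕ) : Cardinal) ≤ Cardinal.mk K :=
        Cardinal.mk_coe_finset.symm.le.trans (Cardinal.mk_set_le _)
      rw [Finset.card_eq_three.mpr ⟨0, 1, b, zero_ne_one, hb.symm, hb1.symm, rfl⟩] at h3
      refine lt_of_lt_of_le ?_ h3
      exact_mod_cast (by norm_num : (2 : ℕ) < 3)
  have main : ∃ l : K, ∀ s, F s = l • f s := by
    by_cases hdr : ∃ t, f t = d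
    · obtain ⟨t, ht⟩ := hdr
      refine abstract_local f hf F t (fun w hw => hq' w ?_) hdim h2
      intro c hc
      have hc0 : c ≠ 0 := by
        rintro rfl
        exact hd0' (by simpa using hc)
      apply hw c⁻¹
      apply hf
      rw [map_smul, ht, hc, inv_smul_smul₀ hc0]
    · refine abstract_local f hf F 0 (fun w _ => hq' w ?_) hdim h2
      intro c hc
      exact hdr ⟨c • w, by rw [map_smul, hc]⟩
  obtain ⟨l, hl⟩ := main
  exact ⟨l • u, fun s => by rw [hl, map_smul, hfs]⟩
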